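/- Let p be a prime and let G be a finite p-group of maximal class with |G| ≥ p^6. Then p^4 ∈ cod(G). -/

import Mathlib

open CategoryTheory

/-- The degree of a complex representation: the dimension of the underlying vector space. -/
noncomputable def repDegree {G : Type} [Group G] (V : FDRep ℂ G) : ℕ :=
  Module.finrank ℂ V

/-- The kernel of a representation of `G`, as a subgroup of `G`. -/
noncomputable def repKer {G : Type} [Group G] (V : FDRep ℂ G) : Subgroup G :=
  MonoidHom.ker (Representation.asGroupHom V.ρ)

/-- The codegree of a character: `|G : ker χ| / χ(1)`. -/
noncomputable def codegree {G : Type} [Group G] (V : FDRep ℂ G) : ℕ :=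
  (repKer V).index / repDegree V

/-- `cod(G)`: the set of codegrees of the irreducible complex characters of `G`. -/
def codSet (G : Type) [Group G] : Set ℕ :=
  {m | ∃ V : FDRep ℂ G, Simple V ∧ codegree V = m}

/-- `cd(G)`: the set of degrees of the irreducible complex characters of `G`. -/
def cdSet (G : Type) [Group G] : Set ℕ :=
  {m | ∃ V : FDRep ℂ G, Simple V ∧ repDegree V = m}

/-- The nilpotency class of `G`: the least `n` with `upperCentralSeries G n = ⊤`. -/
noncomputable def nilClass (G : Type) [Group G] : ℕ :=
  sInf {n | upperCentralSeries G n = ⊤}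

open scoped Classical in
/-- The character of `G` induced from the linear character `lam` of the subgroup `H`. -/
noncomputable def indLinearChar {G : Type} [Group G] [Fintype G] (H : Subgroup G)
    (lam : H →* ℂˣ) : G → ℂ :=
  fun g => (∑ x : G, if h : x * g * x⁻¹ ∈ H then ((lam ⟨x * g * x⁻¹, h⟩ : ℂˣ) : ℂ) else 0) /
    (Nat.card H : ℂ)

/-- A finite group is normally monomial if every irreducible complex character is induced
from a linear character of a normal subgroup. -/
def NormallyMonomial (G : Type) [Group G] [Fintype G] : Prop :=
  ∀ V : FDRep ℂ G, Simple V → ∃ (H : Subgroup G) (lam : H →* ℂˣ),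
    H.Normal ∧ FDRep.character V = indLinearChar H lam

/-!
Since `cod(G/Z(G)) ⊆ cod(G)` and `G/Z(G)` is again of maximal class, it suffices to treat
`|G| = p^6`. The centre has prime order, so `G` has a faithful irreducible representation `V`, of
degree `d` say. Here `d` divides `p^6`, and `d^2 ≤ |G : Z(G)| = p^5` because the operators of `G`,
taken modulo scalars, span `End V`. As `G` is not abelian, `d` is `p` or `p^2`. If `d = p^2`, then
`|G|/d = p^4`. If `d = p`, then `G/Z(G)` acts faithfully on `End V` by conjugation, and its centre
has prime order too, so `End V` has a faithful irreducible constituent. This constituent is not the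
whole of `End V`, which contains the identity as a fixed vector; its degree is thus less than `p^2`,
hence equal to `p`, and its codegree is `p^5/p = p^4`.
-/

section Nilpotent

open scoped commutatorElement

variable {G : Type*} [Group G]

theorem inf_center_ne_bot_of_normal [Group.IsNilpotent G] (N : Subgroup G) [N.Normal]
    (hN : N ≠ ⊥) : N ⊓ Subgroup.center G ≠ ⊥ := by
  classical
  have hex : ∃ i, N ⊓ Subgroup.upperCentralSeries G i ≠ ⊥ := by
    obtain ⟨i, hi⟩ := Group.IsNilpotent.nilpotent G
    exact ⟨i, by rwa [hi, inf_top_eq]⟩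
  obtain ⟨i, hi⟩ : ∃ i, Nat.find hex = i + 1 :=
    Nat.exists_eq_succ_of_ne_zero fun h0 => Nat.find_spec hex (by simp [h0])
  have hbot : N ⊓ Subgroup.upperCentralSeries G i = ⊥ :=
    not_not.1 (Nat.find_min hex (by omega))
  have hspec : N ⊓ Subgroup.upperCentralSeries G (i + 1) ≠ ⊥ := hi ▸ Nat.find_spec hex
  refine ne_bot_of_le_ne_bot hspec (le_inf inf_le_left fun x hx => ?_)
  refine Subgroup.mem_center_iff.2 fun g => ?_
  have hcomm : ⁅x, g⁆ ∈ N ⊓ Subgroup.upperCentralSeries G i :=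
    ⟨Subgroup.commutator_le_left N ⊤ (Subgroup.commutator_mem_commutator hx.1 (Subgroup.mem_top g)),
      Subgroup.mem_upperCentralSeries_succ_iff.1 hx.2 g⟩
  rw [hbot, Subgroup.mem_bot, commutatorElement_eq_one_iff_mul_comm] at hcomm
  exact hcomm.symm

theorem center_le_of_normal_of_card_center_prime [Group.IsNilpotent G]
    (hZ : (Nat.card (Subgroup.center G)).Prime) (N : Subgroup G) [N.Normal] (hN : N ≠ ⊥) :
    Subgroup.center G ≤ N := by
  have := Fact.mk hZ
  rcases (N.subgroupOf (Subgroup.center G)).eq_bot_or_eq_top_of_prime_card with h | h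
  · exact absurd (Subgroup.subgroupOf_eq_bot.1 h).eq_bot (inf_center_ne_bot_of_normal N hN)
  · exact Subgroup.subgroupOf_eq_top.1 h

theorem injective_of_map_center_ne_one [Group.IsNilpotent G] {M : Type*} [MulOneClass M]
    (hZ : (Nat.card (Subgroup.center G)).Prime) (f : G →* M) {z : G}
    (hz : z ∈ Subgroup.center G) (hfz : f z ≠ 1) : Function.Injective f := by
  rw [← MonoidHom.ker_eq_bot_iff]
  by_contra hker
  exact hfz (center_le_of_normal_of_card_center_prime hZ f.ker hker hz)

end Nilpotent

section PGroup

variable {p : ℕ} [Fact p.Prime] {G : Type*} [Group G]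

theorem exists_card_center_and_card_quotient_center {m : ℕ} (hG : Nat.card G = p ^ m)
    (hcomm : ¬ IsMulCommutative G) :
    ∃ a b, 1 ≤ a ∧ 2 ≤ b ∧ a + b = m ∧ Nat.card (Subgroup.center G) = p ^ a ∧
      Nat.card (G ⧸ Subgroup.center G) = p ^ b := by
  have hp : p.Prime := Fact.out
  have : Finite G := Nat.finite_of_card_ne_zero (hG ▸ pow_ne_zero m hp.ne_zero)
  have hm : 0 < m := Nat.pos_of_ne_zero fun h0 => hcomm <| by
    have : IsCyclic G := isCyclic_of_card_dvd_prime (p := p) (by simp [hG, h0])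
    infer_instance
  obtain ⟨a, ha, hZ⟩ := IsPGroup.card_center_eq_prime_pow hG hm
  obtain ⟨b, -, hQ⟩ := (Nat.dvd_prime_pow hp).1 (hG ▸ (Subgroup.center G).card_quotient_dvd_card)
  refine ⟨a, b, ha, ?_, ?_, hZ, hQ⟩
  · by_contra! hb
    have : IsCyclic (G ⧸ Subgroup.center G) := by
      refine isCyclic_of_card_dvd_prime (p := p) (hQ ▸ ?_)
      simpa using pow_dvd_pow p (Nat.le_of_lt_succ hb)
    exact hcomm (isMulCommutative_of_isCyclic_quotient_center_self G)
  · refine Nat.pow_right_injective hp.two_le ?_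
    change p ^ (a + b) = p ^ m
    rw [← hG, Subgroup.card_eq_card_quotient_mul_card_subgroup (Subgroup.center G), hZ, hQ, pow_add,
      mul_comm]

theorem isNilpotent_of_card_eq_prime_pow {m : ℕ} (hG : Nat.card G = p ^ m) :
    Group.IsNilpotent G :=
  have : Finite G := Nat.finite_of_card_ne_zero (hG ▸ pow_ne_zero m (Fact.out : p.Prime).ne_zero)
  (IsPGroup.of_card hG).isNilpotent

theorem nilpotencyClass_lt_of_card_eq_prime_pow {m : ℕ} (hG : Nat.card G = p ^ m) (hm : 2 ≤ m) :
    Group.nilpotencyClass G < m := by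
  induction m using Nat.strong_induction_on generalizing G with
  | _ m ih =>
    have := isNilpotent_of_card_eq_prime_pow hG
    by_cases hcomm : IsMulCommutative G
    · exact (Group.IsNilpotent.nilpotencyClass_le_one_iff.2 hcomm).trans_lt hm
    · obtain ⟨a, b, ha, hb, hab, -, hQ⟩ := exists_card_center_and_card_quotient_center hG hcomm
      have hlt := ih b (by omega) hQ hb
      rw [Group.nilpotencyClass_quotient_center] at hlt
      omega

end PGroup

/-- `IsMaximalClass p n G` says that `G` is a group of order `p ^ n` and nilpotency class `n - 1`.
The class is recorded as `class + 1 = n`, which avoids truncated subtraction. -/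
structure IsMaximalClass (p n : ℕ) (G : Type*) [Group G] : Prop where
  card_eq : Nat.card G = p ^ n
  nilpotencyClass_add_one : Group.nilpotencyClass G + 1 = n

namespace IsMaximalClass

variable {p n : ℕ} [Fact p.Prime] {G : Type*} [Group G]

theorem isNilpotent (h : IsMaximalClass p n G) : Group.IsNilpotent G :=
  isNilpotent_of_card_eq_prime_pow h.card_eq

theorem finite (h : IsMaximalClass p n G) : Finite G :=
  Nat.finite_of_card_ne_zero (h.card_eq ▸ pow_ne_zero n (Fact.out : p.Prime).ne_zero)

theorem not_isMulCommutative (h : IsMaximalClass p n G) (hn : 3 ≤ n) : ¬ IsMulCommutative G := by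
  have := h.isNilpotent
  rw [← Group.IsNilpotent.nilpotencyClass_le_one_iff]
  have := h.nilpotencyClass_add_one
  omega

theorem card_center_and_card_quotient_center (h : IsMaximalClass p (n + 1) G) (hn : 2 ≤ n) :
    Nat.card (Subgroup.center G) = p ∧ Nat.card (G ⧸ Subgroup.center G) = p ^ n := by
  obtain ⟨a, b, ha, hb, hab, hZ, hQ⟩ :=
    exists_card_center_and_card_quotient_center h.card_eq (h.not_isMulCommutative (by omega))
  have hlt := nilpotencyClass_lt_of_card_eq_prime_pow hQ hb
  rw [Group.nilpotencyClass_quotient_center] at hlt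
  have := h.nilpotencyClass_add_one
  obtain rfl : a = 1 := by omega
  obtain rfl : b = n := by omega
  exact ⟨by rw [hZ, pow_one], hQ⟩

theorem card_center (h : IsMaximalClass p n G) (hn : 3 ≤ n) :
    Nat.card (Subgroup.center G) = p := by
  obtain ⟨n, rfl⟩ := Nat.exists_eq_add_of_le' (Nat.one_le_of_lt hn)
  exact (h.card_center_and_card_quotient_center (by omega)).1

theorem quotient_center (h : IsMaximalClass p (n + 1) G) (hn : 2 ≤ n) :
    IsMaximalClass p n (G ⧸ Subgroup.center G) where
  card_eq := (h.card_center_and_card_quotient_center hn).2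
  nilpotencyClass_add_one := by
    have := h.nilpotencyClass_add_one
    rw [Group.nilpotencyClass_quotient_center]
    omega

end IsMaximalClass

theorem nilClass_eq_nilpotencyClass (G : Type) [Group G] [Group.IsNilpotent G] :
    nilClass G = Group.nilpotencyClass G := by
  classical
  rw [nilClass, Group.nilpotencyClass_def]
  exact Nat.sInf_def (Group.IsNilpotent.nilpotent G)

section Constituents

open Representation MonoidAlgebra

variable {k G V : Type*} [Field k] [Group G] [AddCommGroup V] [Module k V]

theorem nontrivial_of_isIrreducible (ρ : Representation k G V) [IsIrreducible ρ] : Nontrivial V :=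
  IsSimpleModule.nontrivial k[G] ρ.asModule

theorem isIrreducible_toRepresentation_of_isAtom {ρ : Representation k G V}
    {σ : Subrepresentation ρ} (hσ : IsAtom σ) : IsIrreducible σ.toRepresentation where
  exists_pair_ne := ⟨⊥, ⊤, fun h => hσ.1 <| Subrepresentation.toSubmodule_injective <|
    Submodule.subsingleton_iff_eq_bot.1 <| (Submodule.subsingleton_iff k).1 <|
      subsingleton_of_bot_eq_top <| congrArg Subrepresentation.toSubmodule h⟩
  eq_bot_or_eq_top τ := by
    let τ' : Subrepresentation ρ :=
      { toSubmodule := τ.toSubmodule.map σ.toSubmodule.subtype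
        apply_mem_toSubmodule := by
          rintro g _ ⟨v, hv, rfl⟩
          exact ⟨σ.toRepresentation g v, τ.apply_mem_toSubmodule g hv, rfl⟩ }
    have hle : τ' ≤ σ := Submodule.map_subtype_le σ.toSubmodule τ.toSubmodule
    have hmap := Submodule.map_injective_of_injective σ.toSubmodule.injective_subtype
    rcases hσ.le_iff.1 hle with h | h
    · exact .inl <| Subrepresentation.toSubmodule_injective <| hmap <|
        (congrArg Subrepresentation.toSubmodule h).trans (Submodule.map_bot _).symm
    · exact .inr <| Subrepresentation.toSubmodule_injective <| hmap <|
        (congrArg Subrepresentation.toSubmodule h).trans (Submodule.map_subtype_top _).symm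

theorem exists_isIrreducible_apply_ne_one (ρ : Representation k G V) [IsSemisimpleRepresentation ρ]
    {z : G} (hz : z ∈ Subgroup.center G) (hρz : ρ z ≠ 1) :
    ∃ σ : Subrepresentation ρ, IsIrreducible σ.toRepresentation ∧ σ.toRepresentation z ≠ 1 := by
  have : IsSemisimpleModule k[G] ρ.asModule :=
    (isSemisimpleRepresentation_iff_isSemisimpleModule_asModule ρ).1 inferInstance
  have : IsAtomic (Subrepresentation ρ) :=
    Subrepresentation.subrepresentationSubmoduleOrderIso.isAtomic_iff.2 inferInstance
  let F : Subrepresentation ρ :=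
    { toSubmodule := LinearMap.eqLocus (ρ z) 1
      apply_mem_toSubmodule := fun g v hv => by
        rw [LinearMap.mem_eqLocus, Module.End.one_apply] at hv ⊢
        rw [← Module.End.mul_apply, ← map_mul, ← Subgroup.mem_center_iff.1 hz g, map_mul,
          Module.End.mul_apply, hv] }
  have hF : F ≠ ⊤ := fun h => hρz <| LinearMap.eqLocus_eq_top.1 <|
    congrArg Subrepresentation.toSubmodule h
  obtain ⟨C, hFC⟩ := exists_isCompl F
  obtain ⟨σ, hσ, hσC⟩ := (IsAtomic.eq_bot_or_exists_atom_le C).resolve_left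
    fun hC => hF (by simpa [hC] using hFC.sup_eq_top)
  refine ⟨σ, isIrreducible_toRepresentation_of_isAtom hσ, fun hz1 => hσ.1 ?_⟩
  have hσF : σ ≤ F := fun v hv => congrArg Subtype.val (LinearMap.congr_fun hz1 ⟨v, hv⟩)
  exact le_bot_iff.1 (hFC.disjoint hσF hσC)

theorem exists_isIrreducible_injective [Finite G] [NeZero (Nat.card G : k)] [Group.IsNilpotent G]
    (hZ : (Nat.card (Subgroup.center G)).Prime) (ρ : Representation k G V)
    (hρ : Function.Injective ρ) :
    ∃ σ : Subrepresentation ρ, IsIrreducible σ.toRepresentation ∧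
      Function.Injective σ.toRepresentation := by
  have : Nontrivial (Subgroup.center G) := Finite.one_lt_card_iff_nontrivial.1 hZ.one_lt
  obtain ⟨⟨z, hz⟩, hz1⟩ := exists_ne (1 : Subgroup.center G)
  have hρz : ρ z ≠ 1 := fun h => hz1 (Subtype.ext (hρ (h.trans (map_one ρ).symm)))
  obtain ⟨σ, hirr, hσz⟩ := exists_isIrreducible_apply_ne_one ρ hz hρz
  exact ⟨σ, hirr, injective_of_map_center_ne_one hZ σ.toRepresentation hz hσz⟩

theorem leftRegular_injective {k G : Type*} [CommRing k] [Nontrivial k] [Monoid G] :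
    Function.Injective (leftRegular k G) := fun g h hgh => by
  have h1 := LinearMap.congr_fun hgh (single 1 1)
  simpa [ofMulAction_single, single_left_inj] using h1

end Constituents

section Degree

open Representation MonoidAlgebra

variable {k G V : Type*} [Field k] [Group G] [AddCommGroup V] [Module k V]

theorem isIntegral_of_sum_smul_eq_smul_one [Nontrivial V] [Fintype G] (ρ : Representation k G V)
    {a : G → k} (ha : ∀ g, IsIntegral ℤ (a g)) {c : k}
    (hc : ∑ g, a g • ρ g = c • (1 : Module.End k V)) : IsIntegral ℤ c := by
  -- `O[G]` is finite over the ring `O` of algebraic integers, hence integral over it.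
  let O := integralClosure ℤ k
  let φ : O[G] →ₐ[O] Module.End k V := MonoidAlgebra.lift O (Module.End k V) G ρ
  have hφ : φ (∑ g, single g (⟨a g, ha g⟩ : O)) = algebraMap k (Module.End k V) c := by
    rw [map_sum, Algebra.algebraMap_eq_smul_one, ← hc]
    exact Finset.sum_congr rfl fun g _ => MonoidAlgebra.lift_single _ _ _
  have hcInt : IsIntegral O (algebraMap k (Module.End k V) c) :=
    hφ ▸ (Algebra.IsIntegral.isIntegral (R := O) _).map φ
  exact isIntegral_trans c <|
    (isIntegral_algebraMap_iff (algebraMap k (Module.End k V)).injective).1 hcInt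

theorem asAlgebraHom_mem_span_range (ρ : Representation k G V) (x : k[G]) :
    ρ.asAlgebraHom x ∈ Submodule.span k (Set.range ρ) := by
  induction x using MonoidAlgebra.induction_on with
  | of g => exact Submodule.subset_span ⟨g, by simp⟩
  | add a b ha hb => rw [map_add]; exact Submodule.add_mem _ ha hb
  | smul c a ha => rw [map_smul]; exact Submodule.smul_mem _ c ha

variable [IsAlgClosed k] [FiniteDimensional k V]

theorem exists_eq_smul_one_of_commute (ρ : Representation k G V) [IsIrreducible ρ]
    {f : Module.End k V} (hf : ∀ g, Commute f (ρ g)) : ∃ c : k, f = c • 1 := by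
  obtain ⟨c, hc⟩ := IsIrreducible.algebraMap_intertwiningMap_bijective_of_isAlgClosed.2
    (f.intertwiningMap_of_isIntertwiningMap ρ ρ fun g => LinearMap.congr_fun (hf g))
  exact ⟨c, LinearMap.ext fun v => congrArg (fun φ : IntertwiningMap ρ ρ => φ v) hc.symm⟩

theorem exists_eq_smul_one_of_mem_center (ρ : Representation k G V) [IsIrreducible ρ] {z : G}
    (hz : z ∈ Subgroup.center G) : ∃ c : k, ρ z = c • 1 :=
  exists_eq_smul_one_of_commute ρ fun g =>
    Commute.map (show Commute z g from (Subgroup.mem_center_iff.1 hz g).symm) ρ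

theorem isIntegral_character [Finite G] (ρ : Representation k G V) (g : G) :
    IsIntegral ℤ (ρ.character g) := by
  rw [character, Module.End.trace_eq_sum_roots_charpoly_of_splits (IsAlgClosed.splits _)]
  refine IsIntegral.multiset_sum fun μ hμ => ?_
  have hev : Module.End.HasEigenvalue (ρ g) μ :=
    (Module.End.hasEigenvalue_iff_isRoot_charpoly _ _).2 (Polynomial.mem_roots'.1 hμ).2
  obtain ⟨v, hv⟩ := hev.exists_hasEigenvector
  have hpow : μ ^ Nat.card G • v = (1 : k) • v := by
    rw [← hv.pow_apply, ← map_pow, pow_card_eq_one', map_one, Module.End.one_apply, one_smul]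
  refine IsIntegral.of_pow (Nat.card_pos (α := G)) ?_
  rw [smul_left_injective k hv.2 hpow]
  exact isIntegral_one

theorem sum_character_inv_smul [Fintype G] [NeZero (Nat.card G : k)] (ρ : Representation k G V)
    [IsIrreducible ρ] :
    ∃ c : k, ∑ g, ρ.character g⁻¹ • ρ g = c • (1 : Module.End k V) ∧
      c * Module.finrank k V = Nat.card G := by
  obtain ⟨c, hc⟩ := exists_eq_smul_one_of_commute ρ (f := ∑ g, ρ.character g⁻¹ • ρ g) fun h => by
    rw [Commute, SemiconjBy, Finset.sum_mul, Finset.mul_sum]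
    refine Fintype.sum_equiv (MulAut.conj h⁻¹).toEquiv _ _ fun g => ?_
    have hchar : ρ.character (h⁻¹ * g * h)⁻¹ = ρ.character g⁻¹ := by
      simpa [mul_assoc] using char_conj ρ g⁻¹ h⁻¹
    change _ = ρ h * (ρ.character (h⁻¹ * g * h⁻¹⁻¹)⁻¹ • ρ (h⁻¹ * g * h⁻¹⁻¹))
    rw [inv_inv, hchar, smul_mul_assoc, mul_smul_comm, ← map_mul, ← map_mul, mul_assoc h⁻¹,
      mul_inv_cancel_left]
  refine ⟨c, hc, ?_⟩
  have := invertibleOfNonzero (NeZero.ne (Nat.card G : k))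
  have horth : ∑ g, ρ.character g * ρ.character g⁻¹ = Nat.card G := by
    have h := card_inv_mul_sum_char_mul_char_eq_finrank ρ ρ
    rwa [IsIrreducible.finrank_intertwiningMap_self, Nat.cast_one,
      inv_mul_eq_one₀ (NeZero.ne _), eq_comm] at h
  calc c * Module.finrank k V = LinearMap.trace k V (c • 1) := by
        rw [map_smul, LinearMap.trace_one, smul_eq_mul]
    _ = ∑ g, ρ.character g * ρ.character g⁻¹ := by
        rw [← hc, map_sum]
        exact Finset.sum_congr rfl fun g _ => by rw [map_smul, smul_eq_mul, mul_comm]; rfl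
    _ = Nat.card G := horth

theorem finrank_dvd_card_of_isIrreducible [CharZero k] [Finite G] (ρ : Representation k G V)
    [IsIrreducible ρ] : Module.finrank k V ∣ Nat.card G := by
  have := Fintype.ofFinite G
  have := nontrivial_of_isIrreducible ρ
  obtain ⟨c, hsum, hc⟩ := sum_character_inv_smul ρ
  have hcInt : IsIntegral ℤ c :=
    isIntegral_of_sum_smul_eq_smul_one ρ (fun g => isIntegral_character ρ g⁻¹) hsum
  have hd : (Module.finrank k V : ℚ) ≠ 0 := Nat.cast_ne_zero.2 Module.finrank_pos.ne'
  have hcq : c = algebraMap ℚ k (Nat.card G / Module.finrank k V) := by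
    rw [eq_div_of_mul_eq (Nat.cast_ne_zero.2 Module.finrank_pos.ne') hc]
    simp
  rw [hcq, isIntegral_algebraMap_iff (algebraMap ℚ k).injective] at hcInt
  obtain ⟨m, hm⟩ := IsIntegrallyClosed.isIntegral_iff.1 hcInt
  rw [eq_div_iff hd, eq_intCast] at hm
  exact Int.natCast_dvd_natCast.1 ⟨m, by rw [mul_comm]; exact_mod_cast hm.symm⟩

theorem span_range_eq_top_of_isIrreducible (ρ : Representation k G V) [IsIrreducible ρ] :
    Submodule.span k (Set.range ρ) = ⊤ := by
  refine eq_top_iff.2 fun f _ => ?_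
  -- `f` commutes with the `k[G]`-endomorphisms of `V`, which are scalars: Jacobson density applies.
  have hscalar (e : Module.End k[G] ρ.asModule) : ∃ c : k, ∀ v, e v = c • v := by
    obtain ⟨c, rfl⟩ := (IsSimpleModule.algebraMap_end_bijective_of_isAlgClosed k).2 e
    exact ⟨c, fun _ => rfl⟩
  let F : Module.End (Module.End k[G] ρ.asModule) ρ.asModule :=
    { toFun := fun v => f v
      map_add' := f.map_add
      map_smul' := fun e v => by
        obtain ⟨c, hc⟩ := hscalar e
        exact (congrArg f (hc v)).trans ((f.map_smul c v).trans (hc (f v)).symm) }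
  let b := Module.finBasis k V
  obtain ⟨r, hr⟩ := jacobson_density F (Set.finite_range b).toFinset
  have hfr : f = ρ.asAlgebraHom r :=
    b.ext fun i => hr (b i) ((Set.finite_range b).mem_toFinset.2 ⟨i, rfl⟩)
  rw [hfr]
  exact asAlgebraHom_mem_span_range ρ r

theorem finrank_sq_le_card_quotient_center [Finite G] (ρ : Representation k G V)
    [IsIrreducible ρ] :
    Module.finrank k V ^ 2 ≤ Nat.card (G ⧸ Subgroup.center G) := by
  have := Fintype.ofFinite (G ⧸ Subgroup.center G)
  let s : G ⧸ Subgroup.center G → Module.End k V := fun q => ρ q.out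
  have hs : Submodule.span k (Set.range s) = ⊤ := by
    rw [eq_top_iff, ← span_range_eq_top_of_isIrreducible ρ, Submodule.span_le]
    rintro _ ⟨g, rfl⟩
    obtain ⟨⟨z, hz⟩, hgz⟩ := QuotientGroup.mk_out_eq_mul (Subgroup.center G) g
    obtain ⟨c, hc⟩ := exists_eq_smul_one_of_mem_center ρ (inv_mem hz)
    have hg : ρ g = c • s g := calc
      ρ g = ρ (g * z) * ρ z⁻¹ := by rw [← map_mul, mul_inv_cancel_right]
      _ = c • s g := by rw [hc, mul_smul_comm, mul_one, ← hgz]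
    exact hg ▸ Submodule.smul_mem _ _ (Submodule.subset_span ⟨_, rfl⟩)
  calc Module.finrank k V ^ 2 = (Set.range s).finrank k := by
        rw [Set.finrank, hs, finrank_top, Module.finrank_linearMap, sq]
    _ ≤ Nat.card (G ⧸ Subgroup.center G) := by
        rw [Nat.card_eq_fintype_card]; exact finrank_range_le_card s

end Degree

section ConjugationAction

open Representation

variable {k G V : Type*} [Field k] [Group G] [AddCommGroup V] [Module k V]

theorem eq_one_of_isIrreducible_of_forall_apply_eq_self (ρ : Representation k G V) [IsIrreducible ρ]
    {v : V} (hv : v ≠ 0) (hfix : ∀ g, ρ g v = v) : ρ = 1 := by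
  let F : Subrepresentation ρ :=
    { toSubmodule := ρ.invariants
      apply_mem_toSubmodule := fun g w hw => by rwa [hw g] }
  have hF : F = ⊤ := (eq_bot_or_eq_top F).resolve_left fun h => hv <|
    (show v ∈ (⊥ : Subrepresentation ρ) from h ▸ hfix)
  ext g w
  have hw : w ∈ F := hF ▸ Submodule.mem_top
  exact hw g

theorem isMulCommutative_of_finrank_eq_one {ρ : Representation k G V} (hρ : Function.Injective ρ)
    (hV : Module.finrank k V = 1) : IsMulCommutative G := by
  refine ⟨⟨fun g h => hρ ?_⟩⟩
  obtain ⟨a, ha, -⟩ := LinearMap.existsUnique_eq_smul_id_of_finrank_eq_one hV (ρ g)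
  rw [map_mul, map_mul, ha]
  ext v
  simp

theorem mem_center_of_linHom_self_eq_one {ρ : Representation k G V} (hρ : Function.Injective ρ)
    {g : G} (hg : linHom ρ ρ g = 1) : g ∈ Subgroup.center G :=
  Subgroup.mem_center_iff.2 fun h => hρ <| by
    have hconj : ρ g ∘ₗ ρ h ∘ₗ ρ g⁻¹ = ρ h := LinearMap.congr_fun hg (ρ h)
    rw [map_mul, map_mul]
    nth_rw 1 [← hconj]
    ext v
    simp

variable [IsAlgClosed k] [FiniteDimensional k V]

theorem linHom_self_eq_one_of_mem_center (ρ : Representation k G V) [IsIrreducible ρ] {z : G}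
    (hz : z ∈ Subgroup.center G) : linHom ρ ρ z = 1 := by
  obtain ⟨c, hc⟩ := exists_eq_smul_one_of_mem_center ρ hz
  ext f v
  rw [linHom_apply]
  calc ρ z (f (ρ z⁻¹ v)) = f (ρ z (ρ z⁻¹ v)) := by simp [hc]
    _ = f v := by rw [self_inv_apply]

/-- The action of `G ⧸ Z(G)` on `End V` by conjugation through an irreducible representation `ρ`
of `G` on `V`; it is well defined because `Z(G)` acts on `V` by scalars. -/
def conjEnd (ρ : Representation k G V) [IsIrreducible ρ] :
    Representation k (G ⧸ Subgroup.center G) (Module.End k V) :=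
  QuotientGroup.lift _ (linHom ρ ρ) fun _ => linHom_self_eq_one_of_mem_center ρ

theorem conjEnd_injective {ρ : Representation k G V} [IsIrreducible ρ]
    (hρ : Function.Injective ρ) : Function.Injective (conjEnd ρ) := by
  refine (injective_iff_map_eq_one (conjEnd ρ)).2 fun q hq => ?_
  induction q using QuotientGroup.induction_on with
  | H g => exact (QuotientGroup.eq_one_iff g).2 (mem_center_of_linHom_self_eq_one hρ hq)

theorem conjEnd_apply_one (ρ : Representation k G V) [IsIrreducible ρ]
    (q : G ⧸ Subgroup.center G) : conjEnd ρ q 1 = 1 := by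
  induction q using QuotientGroup.induction_on with
  | H g =>
    change ρ g * (1 * ρ g⁻¹) = 1
    rw [one_mul, ← map_mul, mul_inv_cancel, map_one]

theorem finrank_lt_sq_of_subrepresentation_conjEnd {ρ : Representation k G V} [IsIrreducible ρ]
    (σ : Subrepresentation (conjEnd ρ)) [IsIrreducible σ.toRepresentation]
    (hσ : σ.toRepresentation ≠ 1) :
    Module.finrank k σ.toSubmodule < Module.finrank k V ^ 2 := by
  have := nontrivial_of_isIrreducible ρ
  rw [sq, ← Module.finrank_linearMap k k V V]
  refine Submodule.finrank_lt fun htop => hσ ?_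
  have hone : (1 : Module.End k V) ∈ σ.toSubmodule := htop ▸ Submodule.mem_top
  refine eq_one_of_isIrreducible_of_forall_apply_eq_self σ.toRepresentation (v := ⟨1, hone⟩)
    (fun h => one_ne_zero (congrArg Subtype.val h)) fun q => Subtype.ext (conjEnd_apply_one ρ q)

end ConjugationAction

section Codegree

open Representation

theorem codSet_subset_of_surjective {G Q : Type} [Group G] [Finite G] [Group Q] (π : G →* Q)
    (hπ : Function.Surjective π) : codSet Q ⊆ codSet G := by
  rintro _ ⟨V, hV, rfl⟩
  have := Finite.of_surjective π hπ
  have := Action.full_res (V := FGModuleCat ℂ) π hπ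
  let F : FDRep ℂ Q ⥤ FDRep ℂ G := Action.res (FGModuleCat ℂ) π
  have hbij : Function.Bijective (F.mapLinearMap ℂ (X := V) (Y := V)) :=
    ⟨F.map_injective, F.map_surjective⟩
  refine ⟨F.obj V, ?_, ?_⟩
  · rw [FDRep.simple_iff_end_is_rank_one] at hV ⊢
    rw [← hV]
    exact (LinearEquiv.ofBijective _ hbij).finrank_eq.symm
  · have hker : repKer (F.obj V) = (repKer V).comap π := by
      ext g
      rw [Subgroup.mem_comap, repKer, repKer, MonoidHom.mem_ker, MonoidHom.mem_ker, Units.ext_iff,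
        Units.ext_iff, asGroupHom_apply, asGroupHom_apply]
      rfl
    rw [codegree, hker, Subgroup.index_comap_of_surjective _ hπ]
    rfl

theorem card_div_finrank_mem_codSet {G V : Type} [Group G] [Finite G] [AddCommGroup V]
    [Module ℂ V] [FiniteDimensional ℂ V] {ρ : Representation ℂ G V} [IsIrreducible ρ]
    (hρ : Function.Injective ρ) : Nat.card G / Module.finrank ℂ V ∈ codSet G := by
  refine ⟨FDRep.of ρ, ?_, ?_⟩
  · have := Fintype.ofFinite G
    have := invertibleOfNonzero (NeZero.ne (Nat.card G : ℂ))
    have h := char_orthonormal ρ ρ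
    rw [if_pos ⟨Representation.Equiv.refl ρ⟩, inv_mul_eq_one₀ (NeZero.ne _)] at h
    exact (FDRep.simple_iff_char_is_norm_one _).2 h.symm
  · have hker : repKer (FDRep.of ρ) = ⊥ := by
      ext g
      rw [repKer, MonoidHom.mem_ker, Units.ext_iff, asGroupHom_apply, Subgroup.mem_bot,
        ← hρ.eq_iff, map_one]
      rfl
    rw [codegree, hker, Subgroup.index_bot]
    rfl

end Codegree

namespace IsMaximalClass

variable {p n : ℕ} [Fact p.Prime] {G : Type} [Group G]

theorem exists_finrank_eq_prime_pow {V : Type*} [AddCommGroup V] [Module ℂ V]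
    [FiniteDimensional ℂ V] (h : IsMaximalClass p n G) (hn : 3 ≤ n) {ρ : Representation ℂ G V}
    [ρ.IsIrreducible] (hρ : Function.Injective ρ) :
    ∃ j, 1 ≤ j ∧ 2 * j < n ∧ Module.finrank ℂ V = p ^ j := by
  have hp : p.Prime := Fact.out
  have := h.finite
  obtain ⟨m, rfl⟩ := Nat.exists_eq_add_of_le' (Nat.one_le_of_lt hn)
  have hdvd := finrank_dvd_card_of_isIrreducible ρ
  have hsq := finrank_sq_le_card_quotient_center ρ
  rw [h.card_eq] at hdvd
  obtain ⟨j, -, hj⟩ := (Nat.dvd_prime_pow hp).1 hdvd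
  rw [(h.card_center_and_card_quotient_center (by omega)).2, hj, ← pow_mul,
    Nat.pow_le_pow_iff_right hp.one_lt] at hsq
  refine ⟨j, Nat.one_le_iff_ne_zero.2 fun h0 => ?_, by omega, hj⟩
  exact h.not_isMulCommutative hn
    (isMulCommutative_of_finrank_eq_one hρ (by rw [hj, h0, pow_zero]))

theorem pow_mem_codSet_of_finrank_eq_prime {V : Type} [AddCommGroup V] [Module ℂ V]
    [FiniteDimensional ℂ V] (h : IsMaximalClass p (n + 2) G) (hn : 2 ≤ n)
    {ρ : Representation ℂ G V} [ρ.IsIrreducible] (hρ : Function.Injective ρ)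
    (hV : Module.finrank ℂ V = p) : p ^ n ∈ codSet G := by
  have hp : p.Prime := Fact.out
  have hQ : IsMaximalClass p (n + 1) (G ⧸ Subgroup.center G) := h.quotient_center (by omega)
  have := h.finite
  have := hQ.isNilpotent
  obtain ⟨σ, hirr, hσ⟩ := exists_isIrreducible_injective
    ((hQ.card_center (by omega)).symm ▸ hp) (conjEnd ρ) (conjEnd_injective hρ)
  have hσ1 : σ.toRepresentation ≠ 1 := fun h1 => hQ.not_isMulCommutative (by omega)
    ⟨⟨fun a b => hσ (by simp [h1])⟩⟩
  obtain ⟨j, hj, -, hσj⟩ := hQ.exists_finrank_eq_prime_pow (by omega) hσ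
  have hlt := finrank_lt_sq_of_subrepresentation_conjEnd σ hσ1
  rw [hσj, hV, Nat.pow_lt_pow_iff_right hp.one_lt] at hlt
  obtain rfl : j = 1 := by omega
  refine codSet_subset_of_surjective _ (QuotientGroup.mk'_surjective (Subgroup.center G)) ?_
  have hmem := card_div_finrank_mem_codSet hσ
  rwa [hσj, hQ.card_eq, Nat.pow_div (by omega) hp.pos] at hmem

theorem pow_four_mem_codSet_of_card_eq_pow_six (h : IsMaximalClass p 6 G) : p ^ 4 ∈ codSet G := by
  have hp : p.Prime := Fact.out
  have := h.finite
  have := h.isNilpotent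
  obtain ⟨ρ, hirr, hρ⟩ := exists_isIrreducible_injective
    ((h.card_center (by norm_num)).symm ▸ hp) (Representation.leftRegular ℂ G) leftRegular_injective
  obtain ⟨j, hj, hj6, hd⟩ := h.exists_finrank_eq_prime_pow (by norm_num) hρ
  obtain rfl | rfl : j = 1 ∨ j = 2 := by omega
  · exact h.pow_mem_codSet_of_finrank_eq_prime (by norm_num) hρ (by rw [hd, pow_one])
  · have hmem := card_div_finrank_mem_codSet hρ
    rwa [hd, h.card_eq, Nat.pow_div (by norm_num) hp.pos] at hmem

theorem pow_four_mem_codSet (h : IsMaximalClass p n G) (hn : 6 ≤ n) : p ^ 4 ∈ codSet G := by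
  induction n, hn using Nat.le_induction generalizing G with
  | base => exact h.pow_four_mem_codSet_of_card_eq_pow_six
  | succ n hn ih =>
    have := h.finite
    exact codSet_subset_of_surjective _ (QuotientGroup.mk'_surjective (Subgroup.center G))
      (ih (h.quotient_center (by omega)))

end IsMaximalClass

/-- A maximal class `p`-group of order at least `p^6` has `p^4` as a codegree. -/
theorem maximal_class_p_fourth_codegree (p n : ℕ) (hp : p.Prime) (G : Type) [Group G] [Fintype G]
    (hcard : Fintype.card G = p ^ n) (hn : 6 ≤ n) (hmax : nilClass G = n - 1) :
    p ^ 4 ∈ codSet G := by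
  have := Fact.mk hp
  have hG : Nat.card G = p ^ n := by rw [Nat.card_eq_fintype_card, hcard]
  have := isNilpotent_of_card_eq_prime_pow hG
  have h : IsMaximalClass p n G := ⟨hG, by rw [← nilClass_eq_nilpotencyClass, hmax]; omega⟩
  exact h.pow_four_mem_codSet hn
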